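/- Let 0 < p < 1, ν = p δ₁ + (1−p) δ₀ on [0,1], μ_ν = ν × λ on S = [0,1]², and W the kernel on S defined by W((s₁,t₁),(s₂,t₂)) = s₂ if t₁ < t₂, s₁ if t₁ > t₂, 0 if t₁ = t₂. Define φ : [0,1] → S by φ(x) = (0, 1 − x/(1−p)) for 0 ≤ x ≤ 1−p and φ(x) = (1, (x−1+p)/p) for 1−p < x ≤ 1. Then: (i) φ is measure preserving from ([0,1], λ) to (S, μ_ν), i.e. the pushforward of λ under φ is μ_ν; (ii) for λ×λ-almost every (x,y) ∈ [0,1]², W(φ(x),φ(y)) = 1 if p·min(x,y) + (1−p)·max(x,y) > 1−p and W(φ(x),φ(y)) = 0 if p·min(x,y) + (1−p)·max(x,y) < 1−p; that is, W(φ(x),φ(y)) equals a.e. the indicator function of the quadrilateral with vertices (0,1), (1−p,1−p), (1,0) and (1,1). -/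

import Mathlib

open MeasureTheory Filter
open scoped ENNReal

/-- Lebesgue measure on `[0,1]`, as a (probability) measure on `ℝ`. -/
noncomputable def unif01 : Measure ℝ := volume.restrict (Set.Icc (0 : ℝ) 1)

/-- The kernel `W` on `S = [0,1]²`:
`W((s₁,t₁),(s₂,t₂)) = s₂` if `t₁ < t₂`, `s₁` if `t₁ > t₂`, and `0` if `t₁ = t₂`. -/
noncomputable def Wker : ℝ × ℝ → ℝ × ℝ → ℝ := fun x y =>
  if x.2 < y.2 then y.1 else if y.2 < x.2 then x.1 else 0

/-- The map `φ : [0,1] → S`, `φ(x) = (0, 1 − x/(1−p))` for `x ≤ 1−p` and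
`φ(x) = (1, (x−1+p)/p)` for `x > 1−p`. -/
noncomputable def phiMap (p : ℝ) : ℝ → ℝ × ℝ := fun x =>
  if x ≤ 1 - p then (0, 1 - x / (1 - p)) else (1, (x - 1 + p) / p)

/-!
`φ` maps `[0, 1 - p]` and `(1 - p, 1]` affinely onto the fibres `{0} × [0, 1]` and `{1} × [0, 1]`
up to null sets, and pushes Lebesgue measure forward to `1 - p` and `p` times `λ` there; these are
the weights of `ν`.
Off the diagonal, which is a null set, let `x < y`. On a single fibre `{s} × [0, 1]` the kernel is
the constant `s`, while for `x ≤ 1 - p < y` it is `1` exactly when `1 - x / (1 - p)` is less than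
`(y - 1 + p) / p`, that is, when `p * x + (1 - p) * y > 1 - p`. The same inequality separates the
two single-fibre cases, because `p * x + (1 - p) * y` is a convex combination of `x` and `y`.
-/

open Set

theorem ae_prod_fst_ne_snd {α : Type*} [MeasurableSpace α] [MeasurableEq α]
    (μ ν : Measure α) [SFinite ν] [NullSingletonClass ν] :
    ∀ᵐ q : α × α ∂(μ.prod ν), q.1 ≠ q.2 := by
  have h_meas : MeasurableSet {q : α × α | q.1 ≠ q.2} :=
    (measurableSet_eq_fun measurable_fst measurable_snd).compl
  refine (Measure.ae_prod_iff_ae_ae h_meas).2 (Eventually.of_forall fun x => ?_)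
  filter_upwards [ν.ae_ne x] with y hy using hy.symm

theorem map_sub_div_volume {a : ℝ} (ha : a ≠ 0) (c : ℝ) :
    Measure.map (fun x => (x - c) / a) volume = ENNReal.ofReal |a| • volume := by
  have h_comp : (fun x : ℝ => (x - c) / a) = (fun x => x * a⁻¹) ∘ (fun x => x - c) :=
    funext fun x => div_eq_mul_inv (x - c) a
  rw [h_comp, ← Measure.map_map (by fun_prop) (by fun_prop),
    (measurePreserving_sub_right volume c).map_eq, Real.map_volume_mul_right (inv_ne_zero ha),
    inv_inv]

theorem preimage_sub_div_sub_Icc_zero_one {K : Type*} [Field K] [LinearOrder K]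
    [IsStrictOrderedRing K] {c d : K} (hcd : c ≠ d) :
    (fun x => (x - c) / (d - c)) ⁻¹' Icc 0 1 = uIcc c d := by
  have h_comp : (fun x : K => (x - c) / (d - c)) = (fun x => x / (d - c)) ∘ (fun x => x - c) := rfl
  rw [h_comp, preimage_comp, ← uIcc_of_le zero_le_one,
    preimage_div_const_uIcc (sub_ne_zero.2 hcd.symm), preimage_sub_const_uIcc, zero_mul, one_mul,
    zero_add, sub_add_cancel]

theorem map_sub_div_sub_restrict_uIcc {c d : ℝ} (hcd : c ≠ d) :
    Measure.map (fun x => (x - c) / (d - c)) (volume.restrict (uIcc c d))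
      = ENNReal.ofReal |d - c| • unif01 := by
  rw [← preimage_sub_div_sub_Icc_zero_one hcd,
    ← Measure.restrict_map (by fun_prop) measurableSet_Icc,
    map_sub_div_volume (sub_ne_zero.2 hcd.symm), Measure.restrict_smul, unif01]

instance : IsProbabilityMeasure unif01 := ⟨by simp [unif01]⟩

instance : NullSingletonClass unif01 := by unfold unif01; infer_instance

theorem map_prodMk_sub_div_sub_restrict_uIcc {α : Type*} [MeasurableSpace α] (s : α) {c d : ℝ}
    (hcd : c ≠ d) :
    Measure.map (fun x => (s, (x - c) / (d - c))) (volume.restrict (uIcc c d))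
      = (ENNReal.ofReal |d - c| • Measure.dirac s).prod unif01 := by
  rw [Measure.prod_smul_left, Measure.dirac_prod, ← Measure.map_smul,
    ← map_sub_div_sub_restrict_uIcc hcd, Measure.map_map (by fun_prop) (by fun_prop)]
  rfl

theorem unif01_eq_restrict_add_restrict {c : ℝ} (hc : c ∈ Icc (0 : ℝ) 1) :
    unif01 = volume.restrict (Icc 0 c) + volume.restrict (Ioc c 1) := by
  have h_disj : Disjoint (Icc 0 c) (Ioc c 1) :=
    disjoint_left.2 fun _ hx hx' => hx.2.not_gt hx'.1
  rw [unif01, ← Icc_union_Ioc_eq_Icc hc.1 hc.2, Measure.restrict_union h_disj measurableSet_Ioc]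

theorem phiMap_of_le {p x : ℝ} (hx : x ≤ 1 - p) : phiMap p x = (0, 1 - x / (1 - p)) := if_pos hx

theorem phiMap_of_lt {p x : ℝ} (hx : 1 - p < x) : phiMap p x = (1, (x - 1 + p) / p) :=
  if_neg hx.not_ge

theorem measurable_phiMap (p : ℝ) : Measurable (phiMap p) :=
  Measurable.ite measurableSet_Iic (by fun_prop) (by fun_prop)

theorem map_phiMap_restrict_Icc {p : ℝ} (hp : p < 1) :
    Measure.map (phiMap p) (volume.restrict (Icc 0 (1 - p)))
      = (ENNReal.ofReal (1 - p) • Measure.dirac (0 : ℝ)).prod unif01 := by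
  have hq : 0 < 1 - p := sub_pos.2 hp
  -- `φ` decreases along this fibre, so the segment is parametrized from `1 - p` down to `0`.
  have h_map := map_prodMk_sub_div_sub_restrict_uIcc (0 : ℝ) hq.ne'
  rw [uIcc_of_ge hq.le, zero_sub, abs_neg, abs_of_pos hq] at h_map
  rw [← h_map]
  refine Measure.map_congr ?_
  filter_upwards [ae_restrict_mem measurableSet_Icc] with x hx
  rw [phiMap_of_le hx.2, div_neg, sub_div, div_self hq.ne', neg_sub]

theorem map_phiMap_restrict_Ioc {p : ℝ} (hp : 0 < p) :
    Measure.map (phiMap p) (volume.restrict (Ioc (1 - p) 1))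
      = (ENNReal.ofReal p • Measure.dirac (1 : ℝ)).prod unif01 := by
  have hp' : 1 - p < 1 := sub_lt_self 1 hp
  have h_map := map_prodMk_sub_div_sub_restrict_uIcc (1 : ℝ) hp'.ne
  rw [uIcc_of_le hp'.le, sub_sub_cancel, abs_of_pos hp, ← restrict_Ioc_eq_restrict_Icc] at h_map
  rw [← h_map]
  refine Measure.map_congr ?_
  filter_upwards [ae_restrict_mem measurableSet_Ioc] with x hx
  rw [phiMap_of_lt hx.1, sub_add]

theorem map_phiMap_unif01 {p : ℝ} (hp0 : 0 < p) (hp1 : p < 1) :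
    Measure.map (phiMap p) unif01
      = (ENNReal.ofReal p • Measure.dirac (1 : ℝ)
          + ENNReal.ofReal (1 - p) • Measure.dirac 0).prod unif01 := by
  have h_mem : 1 - p ∈ Icc (0 : ℝ) 1 := ⟨(sub_pos.2 hp1).le, (sub_lt_self 1 hp0).le⟩
  conv_lhs => rw [unif01_eq_restrict_add_restrict h_mem]
  rw [Measure.map_add _ _ (measurable_phiMap p), map_phiMap_restrict_Icc hp1,
    map_phiMap_restrict_Ioc hp0, Measure.add_prod, add_comm]

theorem Wker_comm (x y : ℝ × ℝ) : Wker x y = Wker y x := by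
  rcases lt_trichotomy x.2 y.2 with h | h | h
  · simp only [Wker, h, h.not_gt, if_true, if_false]
  · simp only [Wker, h, lt_irrefl, if_false]
  · simp only [Wker, h, h.not_gt, if_true, if_false]

theorem Wker_mk_mk_of_ne (s : ℝ) {t u : ℝ} (h : t ≠ u) : Wker (s, t) (s, u) = s := by
  rcases h.lt_or_gt with h | h
  · exact if_pos h
  · exact (if_neg h.not_gt).trans (if_pos h)

theorem Wker_zero_one (t u : ℝ) : Wker (0, t) (1, u) = if t < u then 1 else 0 := by
  simp only [Wker, ite_self]

theorem one_sub_div_lt_div_iff {K : Type*} [Field K] [LinearOrder K] [IsStrictOrderedRing K]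
    {p : K} (hp0 : 0 < p) (hp1 : p < 1) (x y : K) :
    1 - x / (1 - p) < (y - 1 + p) / p ↔ 1 - p < p * x + (1 - p) * y := by
  have hq : 0 < 1 - p := sub_pos.2 hp1
  rw [one_sub_div hq.ne', div_lt_div_iff₀ hq hp0]
  constructor <;> intro h <;> linarith

theorem Wker_phiMap_of_lt {p x y : ℝ} (hp0 : 0 < p) (hp1 : p < 1) (hxy : x < y) :
    Wker (phiMap p x) (phiMap p y) = if 1 - p < p * x + (1 - p) * y then 1 else 0 := by
  have hq : 0 < 1 - p := sub_pos.2 hp1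
  have h_combo_lt : p * x + (1 - p) * y < y := by
    linarith [mul_lt_mul_of_pos_left hxy hp0]
  have h_lt_combo : x < p * x + (1 - p) * y := by
    linarith [mul_lt_mul_of_pos_left hxy hq]
  rcases le_or_gt y (1 - p) with hy | hy
  · have h_ne : 1 - x / (1 - p) ≠ 1 - y / (1 - p) :=
      (sub_lt_sub_left (div_lt_div_of_pos_right hxy hq) 1).ne'
    rw [phiMap_of_le (hxy.le.trans hy), phiMap_of_le hy, Wker_mk_mk_of_ne 0 h_ne,
      if_neg (h_combo_lt.trans_le hy).not_gt]
  rcases le_or_gt x (1 - p) with hx | hx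
  · simp only [phiMap_of_le hx, phiMap_of_lt hy, Wker_zero_one, one_sub_div_lt_div_iff hp0 hp1]
  · have h_ne : (x - 1 + p) / p ≠ (y - 1 + p) / p :=
      (div_lt_div_of_pos_right (by linarith) hp0).ne
    rw [phiMap_of_lt hx, phiMap_of_lt hy, Wker_mk_mk_of_ne 1 h_ne, if_pos (hx.trans h_lt_combo)]

theorem Wker_phiMap_of_ne {p x y : ℝ} (hp0 : 0 < p) (hp1 : p < 1) (hxy : x ≠ y) :
    Wker (phiMap p x) (phiMap p y)
      = if 1 - p < p * min x y + (1 - p) * max x y then 1 else 0 := by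
  rcases hxy.lt_or_gt with h | h
  · rw [min_eq_left h.le, max_eq_right h.le, Wker_phiMap_of_lt hp0 hp1 h]
  · rw [min_eq_right h.le, max_eq_left h.le, Wker_comm, Wker_phiMap_of_lt hp0 hp1 h]

/-- Let `0 < p < 1`, `ν = p δ₁ + (1−p) δ₀` and `μ_ν = ν × λ` on
`S = [0,1]²`. Then: (i) `φ` is measure preserving from `([0,1], λ)` to `(S, μ_ν)`;
(ii) for `λ×λ`-a.e. `(x,y)`, `W(φ(x),φ(y)) = 1` if `p·min(x,y) + (1−p)·max(x,y) > 1−p`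
and `W(φ(x),φ(y)) = 0` if `p·min(x,y) + (1−p)·max(x,y) < 1−p`; i.e. `W(φ(x),φ(y))` is a.e.
the indicator of the quadrilateral with vertices `(0,1)`, `(1−p,1−p)`, `(1,0)`, `(1,1)`. -/
theorem stmt17 (p : ℝ) (hp0 : 0 < p) (hp1 : p < 1) :
    Measure.map (phiMap p) unif01
      = (ENNReal.ofReal p • Measure.dirac (1 : ℝ)
          + ENNReal.ofReal (1 - p) • Measure.dirac 0).prod unif01 ∧
    ∀ᵐ q : ℝ × ℝ ∂(unif01.prod unif01),
      (1 - p < p * min q.1 q.2 + (1 - p) * max q.1 q.2 →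
        Wker (phiMap p q.1) (phiMap p q.2) = 1) ∧
      (p * min q.1 q.2 + (1 - p) * max q.1 q.2 < 1 - p →
        Wker (phiMap p q.1) (phiMap p q.2) = 0) := by
  refine ⟨map_phiMap_unif01 hp0 hp1, ?_⟩
  filter_upwards [ae_prod_fst_ne_snd unif01 unif01] with q hq
  rw [Wker_phiMap_of_ne hp0 hp1 hq]
  exact ⟨fun h => if_pos h, fun h => if_neg h.not_gt⟩
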